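/- arXiv:2011.14609 — 2 statements merged into one kernel-verified Lean document; each statement's English description precedes it below -/
import Mathlib

section
/- Let m and n be positive integers with n ≥ 4 even, let 0 ≤ ℓ ≤ n−1 be an integer of the same parity as m, and let G = ⟨t, x, y | t² = 1, x^{n/2} = 1, y^m = x^{(ℓ+m)/2}, txt = x⁻¹, tyt = y⁻¹, xy = yx⟩. Then Aut(G; {t, tx, ty}) is isomorphic to the symmetric group S₃ if and only if n = 2ℓ and either ℓ = m or ℓ = 3m. -/
namespace HTGPaper

/-- The honeycomb toroidal graph `HTG(m,n,ℓ)`. -/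
def HTG (m n ℓ : ℕ) : SimpleGraph (ZMod m × ZMod n) :=
  SimpleGraph.fromRel (fun v w =>
    (v.1 = w.1 ∧ (w.2 = v.2 + 1 ∨ w.2 = v.2 - 1)) ∨
    (v.1.val ≠ m - 1 ∧ w.1 = v.1 + 1 ∧ w.2 = v.2 ∧ v.1.val % 2 ≠ v.2.val % 2) ∨
    (v.1.val = m - 1 ∧ w.1 = 0 ∧ w.2 = v.2 + (ℓ : ZMod n) ∧ v.2.val % 2 = m % 2))

/-- Generators of the generalized dihedral group `G`. -/
inductive Gen | t | x | y

/-- Relators of the presentation of `G`. -/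
def rels (m n ℓ : ℕ) : Set (FreeGroup Gen) :=
  {FreeGroup.of Gen.t ^ 2,
   FreeGroup.of Gen.x ^ (n / 2),
   FreeGroup.of Gen.y ^ m * (FreeGroup.of Gen.x ^ ((ℓ + m) / 2))⁻¹,
   FreeGroup.of Gen.t * FreeGroup.of Gen.x * (FreeGroup.of Gen.t)⁻¹ * FreeGroup.of Gen.x,
   FreeGroup.of Gen.t * FreeGroup.of Gen.y * (FreeGroup.of Gen.t)⁻¹ * FreeGroup.of Gen.y,
   FreeGroup.of Gen.x * FreeGroup.of Gen.y * (FreeGroup.of Gen.x)⁻¹ * (FreeGroup.of Gen.y)⁻¹}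

/-- The group `G = ⟨t,x,y | t², x^{n/2}, y^m x^{-(ℓ+m)/2}, txt⁻¹x, tyt⁻¹y, [x,y]⟩`. -/
abbrev G (m n ℓ : ℕ) : Type := PresentedGroup (rels m n ℓ)

def gent (m n ℓ : ℕ) : G m n ℓ := PresentedGroup.of Gen.t
def genx (m n ℓ : ℕ) : G m n ℓ := PresentedGroup.of Gen.x
def geny (m n ℓ : ℕ) : G m n ℓ := PresentedGroup.of Gen.y

/-- The connection set `{t, tx, ty}`. -/
def S (m n ℓ : ℕ) : Set (G m n ℓ) :=
  {gent m n ℓ, gent m n ℓ * genx m n ℓ, gent m n ℓ * geny m n ℓ}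

/-- The Cayley graph of a group with respect to a subset. -/
def cayley (H : Type*) [Group H] (T : Set H) : SimpleGraph H :=
  SimpleGraph.fromRel (fun g h => ∃ s ∈ T, h = g * s)

/-- The Cayley graph of an additive group with respect to a subset. -/
def addCayley (H : Type*) [AddGroup H] (T : Set H) : SimpleGraph H :=
  SimpleGraph.fromRel (fun g h => ∃ s ∈ T, h = g + s)

/-- `Cay(H;T)` is a normal Cayley graph of `H` if the left regular representation `H_L`
is a normal subgroup of the automorphism group, i.e. every conjugate of a left
translation by a graph automorphism is again a left translation. -/
def IsNormalCayley (H : Type*) [Group H] (T : Set H) : Prop :=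
  ∀ (f : cayley H T ≃g cayley H T) (a : H), ∃ b : H,
    ∀ g : H, f (a * f.symm g) = b * g

/-- An `s`-arc of a graph: `s+1` vertices, consecutive ones adjacent, and any three
consecutive vertices pairwise distinct. -/
def IsSArc {V : Type*} (Γ : SimpleGraph V) (s : ℕ) (p : Fin (s + 1) → V) : Prop :=
  (∀ i : Fin s, Γ.Adj (p i.castSucc) (p i.succ)) ∧
  ∀ i j : Fin (s + 1), (i : ℕ) + 2 = (j : ℕ) → p i ≠ p j

/-- A graph is `s`-arc-transitive if its automorphism group is transitive on `s`-arcs. -/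
def IsSArcTransitive {V : Type*} (Γ : SimpleGraph V) (s : ℕ) : Prop :=
  ∀ p q : Fin (s + 1) → V, IsSArc Γ s p → IsSArc Γ s q →
    ∃ f : Γ ≃g Γ, ∀ i, f (p i) = q i

/-- A graph is `s`-arc-regular if its automorphism group is regular on `s`-arcs. -/
def IsSArcRegular {V : Type*} (Γ : SimpleGraph V) (s : ℕ) : Prop :=
  ∀ p q : Fin (s + 1) → V, IsSArc Γ s p → IsSArc Γ s q →
    ∃! f : Γ ≃g Γ, ∀ i, f (p i) = q i

/-- A graph is arc-transitive if it is `1`-arc-transitive. -/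
def IsArcTransitive {V : Type*} (Γ : SimpleGraph V) : Prop :=
  IsSArcTransitive Γ 1

/-- The generalized prism `GPr(k)`. -/
def GPr (k : ℕ) : SimpleGraph (ZMod 2 × ZMod (2 * k)) :=
  SimpleGraph.fromRel (fun v w =>
    (v.1 = w.1 ∧ (w.2 = v.2 + 1 ∨ w.2 = v.2 - 1)) ∨
    (Even v.2.val ∧ w.1 = v.1 + 1 ∧ w.2 = v.2 + 1))

/-- The cubic graph on `k` vertices given by LCF-type data `f`. -/
def lcfGraph (k : ℕ) (f : ℕ → ℤ) : SimpleGraph (ZMod k) :=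
  SimpleGraph.fromRel (fun v w => w = v + 1 ∨ w = v + (f v.val : ZMod k))

/-- The cube graph `Q₃`, LCF notation `[3,-3]⁴`. -/
def cubeGraph : SimpleGraph (ZMod 8) :=
  lcfGraph 8 (fun i => if i % 2 = 0 then 3 else -3)

/-- The Heawood graph, LCF notation `[5,-5]⁷`. -/
def heawood : SimpleGraph (ZMod 14) :=
  lcfGraph 14 (fun i => if i % 2 = 0 then 5 else -5)

/-- The Möbius–Kantor graph, LCF notation `[5,-5]⁸`. -/
def mobiusKantor : SimpleGraph (ZMod 16) :=
  lcfGraph 16 (fun i => if i % 2 = 0 then 5 else -5)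

/-- The Pappus graph, LCF notation `[5,7,-7,7,-7,-5]³`. -/
def pappus : SimpleGraph (ZMod 18) :=
  lcfGraph 18 (fun i =>
    match i % 6 with
    | 0 => 5 | 1 => 7 | 2 => -7 | 3 => 7 | 4 => -7 | _ => -5)

/-- The red edges of `HTG(m,n,ℓ) = Cay(G;{t,tx,ty})`. -/
def Red (m n ℓ : ℕ) : Set (Sym2 (G m n ℓ)) :=
  {e | ∃ g : G m n ℓ, e = s(g, g * gent m n ℓ)}

/-- The blue edges. -/
def Blue (m n ℓ : ℕ) : Set (Sym2 (G m n ℓ)) :=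
  {e | ∃ g : G m n ℓ, e = s(g, g * (gent m n ℓ * genx m n ℓ))}

/-- The green edges. -/
def Green (m n ℓ : ℕ) : Set (Sym2 (G m n ℓ)) :=
  {e | ∃ g : G m n ℓ, e = s(g, g * (gent m n ℓ * geny m n ℓ))}

/-- The three color classes. -/
def colorClasses (m n ℓ : ℕ) : Set (Set (Sym2 (G m n ℓ))) :=
  {Red m n ℓ, Blue m n ℓ, Green m n ℓ}

/-- An automorphism of `Cay(G;{t,tx,ty})` is color permuting if it preserves the
partition of the edges into the three color classes. -/
def IsColorPermuting {m n ℓ : ℕ}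
    (f : cayley (G m n ℓ) (S m n ℓ) ≃g cayley (G m n ℓ) (S m n ℓ)) : Prop :=
  ∀ C ∈ colorClasses m n ℓ, Sym2.map ⇑f '' C ∈ colorClasses m n ℓ

/-- The group `Aut(H;T)` of automorphisms of `H` fixing `T` setwise. -/
def autFixing (H : Type*) [Group H] (T : Set H) : Subgroup (MulAut H) where
  carrier := {φ | ⇑φ '' T = T}
  one_mem' := by
    show ⇑(1 : MulAut H) '' T = T
    simp
  mul_mem' := by
    intro a b ha hb
    show ⇑(a * b) '' T = T
    have h : ⇑(a * b) = ⇑a ∘ ⇑b := rfl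
    rw [h, Set.image_comp]
    rw [show ⇑b '' T = T from hb, show ⇑a '' T = T from ha]
  inv_mem' := by
    intro a ha
    show ⇑a⁻¹ '' T = T
    conv_lhs => rw [← show ⇑a '' T = T from ha]
    rw [← Set.image_comp]
    have h : ⇑a⁻¹ ∘ ⇑a = id := by
      funext g
      simp
    rw [h, Set.image_id]

/-!
Write `k = n / 2` and `a = (ℓ + m) / 2`. Since `t`, `tx`, `ty` generate `G`, the group
`Aut(G; {t, tx, ty})` embeds into the permutations of `{t, tx, ty}`, and it is isomorphic to `S₃`
exactly when the three elements are distinct and the adjacent transpositions `t ↔ tx` and `tx ↔ ty`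
extend to automorphisms. By von Dyck's theorem these extensions exist if and only if
`x ^ (2 * a) = x ^ m`, respectively `y ^ k = 1` and `x ^ m = y ^ a`.

The first equation says `k ∣ ℓ`, the others `m ∣ k`, `m ∣ a` and `m * k ∣ m ^ 2 - a ^ 2`. As
`0 ≤ ℓ < 2 * k`, either `ℓ = 0`, which is impossible for parity reasons, or `ℓ = k`. Writing
`k = q * m` and `a = b * m`, the latter gives `q + 1 = 2 * b` and `q ∣ 1 - b ^ 2`, hence `q ∣ 3`.
-/

section AutFixing

variable {H : Type*} [Group H] {T : Set H}

lemma autFixing.apply_mem_iff (φ : autFixing H T) (g : H) : φ.1 g ∈ T ↔ g ∈ T := by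
  simpa only [show φ.1 '' T = T from φ.2] using φ.1.injective.mem_set_image (s := T) (a := g)

/-- The action of `Aut(H; T)` on `T` by permutations. -/
def autFixing.toPerm (H : Type*) [Group H] (T : Set H) : autFixing H T →* Equiv.Perm T where
  toFun φ := Equiv.Perm.subtypePerm φ.1.toEquiv (apply_mem_iff φ)
  map_one' := rfl
  map_mul' _ _ := rfl

lemma autFixing.toPerm_injective (hT : Subgroup.closure T = ⊤) :
    Function.Injective (toPerm H T) := by
  intro φ ψ h
  have eqOn : Set.EqOn φ.1.toMonoidHom ψ.1.toMonoidHom T := fun g hg =>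
    congrArg Subtype.val (Equiv.congr_fun h ⟨g, hg⟩)
  exact Subtype.ext (MulEquiv.toMonoidHom_injective (MonoidHom.eq_of_eqOn_dense hT eqOn))

/-- The permutations of the index set of a family `s` that are induced by automorphisms of the
ambient group. -/
def inducedPerms {ι : Type*} (s : ι → H) : Subgroup (Equiv.Perm ι) where
  carrier := {σ | ∃ φ : MulAut H, ∀ i, φ (s i) = s (σ i)}
  one_mem' := ⟨1, fun _ => rfl⟩
  mul_mem' := by
    rintro σ τ ⟨φ, hφ⟩ ⟨ψ, hψ⟩
    exact ⟨φ * ψ, fun i => by rw [MulAut.mul_apply, hψ, hφ, Equiv.Perm.mul_apply]⟩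
  inv_mem' := by
    rintro σ ⟨φ, hφ⟩
    exact ⟨φ⁻¹, fun i => by
      rw [MulAut.inv_apply, MulEquiv.symm_apply_eq, hφ, Equiv.Perm.coe_inv, σ.apply_symm_apply]⟩

lemma mem_inducedPerms {ι : Type*} {s : ι → H} {σ : Equiv.Perm ι} :
    σ ∈ inducedPerms s ↔ ∃ φ : MulAut H, ∀ i, φ (s i) = s (σ i) :=
  Iff.rfl

lemma autFixing.toPerm_surjective_iff {ι : Type*} {s : ι → H} (hs : Function.Injective s) :
    Function.Surjective (toPerm H (Set.range s)) ↔ inducedPerms s = ⊤ := by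
  let e := Equiv.ofInjective s hs
  rw [eq_top_iff]
  constructor
  · intro hsurj σ _
    obtain ⟨φ, hφ⟩ := hsurj (e.permCongr σ)
    refine ⟨φ.1, fun i => ?_⟩
    calc φ.1 (s i) = toPerm H (Set.range s) φ (e i) := rfl
      _ = s (σ i) := by rw [hφ, Equiv.permCongr_apply, e.symm_apply_apply]; rfl
  · intro htop τ
    obtain ⟨φ, hφ⟩ := htop (Subgroup.mem_top (e.symm.permCongr τ))
    have hφτ : ∀ g : Set.range s, φ g = τ g := by
      intro g
      obtain ⟨i, rfl⟩ := e.surjective g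
      exact (hφ i).trans (congrArg Subtype.val (e.apply_symm_apply _))
    have image_eq : φ '' Set.range s = Set.range s := by
      rw [← Set.range_comp, show φ ∘ s = s ∘ e.symm.permCongr τ from funext hφ]
      exact (e.symm.permCongr τ).surjective.range_comp s
    exact ⟨⟨φ, image_eq⟩, Equiv.ext fun g => Subtype.ext (hφτ g)⟩

lemma autFixing.nonempty_mulEquiv_perm_iff {ι : Type*} [Finite ι] [Nontrivial ι] {s : ι → H}
    (hs : Subgroup.closure (Set.range s) = ⊤) :
    Nonempty (autFixing H (Set.range s) ≃* Equiv.Perm ι) ↔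
      Function.Injective s ∧ inducedPerms s = ⊤ := by
  have toPerm_inj := toPerm_injective hs
  constructor
  · rintro ⟨e⟩
    have card_aut : Nat.card (autFixing H (Set.range s)) = (Nat.card ι).factorial := by
      rw [Nat.card_congr e.toEquiv, Nat.card_perm]
    have card_le : (Nat.card ι).factorial ≤ (Nat.card (Set.range s)).factorial := by
      rw [← card_aut, ← Nat.card_perm]
      exact Nat.card_le_card_of_injective _ toPerm_inj
    have card_range : Nat.card ι = Nat.card (Set.range s) :=
      (Nat.factorial_inj Finite.one_lt_card).1
        (card_le.antisymm (Nat.factorial_le (Finite.card_range_le s)))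
    have s_inj : Function.Injective s := Set.rangeFactorization_injective.1
      (Set.rangeFactorization_surjective.bijective_of_nat_card_le card_range.le).injective
    have toPerm_bij := toPerm_inj.bijective_of_nat_card_le
      (by rw [Nat.card_perm, card_aut, card_range])
    exact ⟨s_inj, (toPerm_surjective_iff s_inj).1 toPerm_bij.surjective⟩
  · rintro ⟨s_inj, htop⟩
    exact ⟨(MulEquiv.ofBijective _ ⟨toPerm_inj, (toPerm_surjective_iff s_inj).2 htop⟩).trans
      (Equiv.ofInjective s s_inj).symm.permCongrHom⟩

end AutFixing

lemma subgroup_perm_fin_eq_top_iff {r : ℕ} {K : Subgroup (Equiv.Perm (Fin (r + 1)))} :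
    K = ⊤ ↔ ∀ i : Fin r, Equiv.swap i.castSucc i.succ ∈ K := by
  refine ⟨fun hK i => hK ▸ Subgroup.mem_top _, fun hK => ?_⟩
  rw [← Subgroup.toSubmonoid_inj, Subgroup.top_toSubmonoid, eq_top_iff,
    ← Equiv.Perm.mclosure_swap_castSucc_succ, Submonoid.closure_le]
  exact Set.range_subset_iff.2 hK

/-- The relations of the generalized dihedral presentation of `G m n ℓ`, for a triple of elements
of an arbitrary group; `k` and `a` stand for `n / 2` and `(ℓ + m) / 2`. -/
structure IsDihedralTriple {H : Type*} [Group H] (m k a : ℕ) (t x y : H) : Prop where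
  mul_self : t * t = 1
  pow_x : x ^ k = 1
  pow_y : y ^ m = x ^ a
  conj_x : SemiconjBy t x x⁻¹
  conj_y : SemiconjBy t y y⁻¹
  comm : Commute x y

namespace IsDihedralTriple

variable {H : Type*} [Group H] {m k a : ℕ} {t x y : H}

lemma map {H' : Type*} [Group H'] (h : IsDihedralTriple m k a t x y) (f : H →* H') :
    IsDihedralTriple m k a (f t) (f x) (f y) where
  mul_self := by rw [← map_mul, h.mul_self, map_one]
  pow_x := by rw [← map_pow, h.pow_x, map_one]
  pow_y := by rw [← map_pow, h.pow_y, map_pow]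
  conj_x := by simpa only [map_inv] using h.conj_x.map f
  conj_y := by simpa only [map_inv] using h.conj_y.map f
  comm := h.comm.map f

lemma swap_iff (h : IsDihedralTriple m k a t x y) :
    IsDihedralTriple m k a t y x ↔ y ^ k = 1 ∧ x ^ m = y ^ a :=
  ⟨fun h' => ⟨h'.pow_x, h'.pow_y⟩,
    fun ⟨hyk, hxm⟩ => ⟨h.mul_self, hyk, hxm, h.conj_y, h.conj_x, h.comm.symm⟩⟩

lemma mul_left_iff (h : IsDihedralTriple m k a t x y) :
    IsDihedralTriple m k a (t * x) x⁻¹ (x⁻¹ * y) ↔ x ^ (2 * a) = x ^ m := by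
  have pow_y_iff : (x⁻¹ * y) ^ m = x⁻¹ ^ a ↔ x ^ (2 * a) = x ^ m := by
    rw [h.comm.inv_left.mul_pow, h.pow_y, inv_pow, inv_pow, inv_mul_eq_iff_eq_mul,
      eq_mul_inv_iff_mul_eq, ← pow_add, two_mul]
  have conj_inv_x : SemiconjBy (t * x) x⁻¹ x⁻¹⁻¹ :=
    h.conj_x.inv_right.mul_left (Commute.refl x).inv_right
  have conj_y : SemiconjBy (t * x) y y⁻¹ := h.conj_y.mul_left h.comm
  have comm : Commute x⁻¹ (x⁻¹ * y) := (Commute.refl x⁻¹).mul_right h.comm.inv_left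
  refine ⟨fun h' => pow_y_iff.1 h'.pow_y, fun hx => ⟨?_, ?_, pow_y_iff.2 hx, conj_inv_x, ?_, comm⟩⟩
  · nth_rw 1 [h.conj_x.eq]
    rw [mul_assoc, ← mul_assoc t, h.mul_self, one_mul, inv_mul_cancel]
  · rw [inv_pow, h.pow_x, inv_one]
  · rw [mul_inv_rev, ← h.comm.inv_left.inv_inv.eq]
    exact conj_inv_x.mul_right conj_y

lemma of_addCommGroup {A : Type*} [AddCommGroup A] {u v : A} (hu : k • u = 0)
    (hv : m • v = a • u) :
    IsDihedralTriple m k a (Equiv.neg A) (Equiv.addLeft u) (Equiv.addLeft v) where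
  mul_self := by ext; simp
  pow_x := by simp [hu]
  pow_y := by simp [hv]
  conj_x := by ext; simp [add_comm]
  conj_y := by ext; simp [add_comm]
  comm := by simp [Commute, SemiconjBy, ← Equiv.addLeft_add, add_comm]

end IsDihedralTriple

section Presentation

variable {H : Type*} [Group H] {m n ℓ : ℕ}

lemma isDihedralTriple_gen (m n ℓ : ℕ) :
    IsDihedralTriple m (n / 2) ((ℓ + m) / 2) (gent m n ℓ) (genx m n ℓ) (geny m n ℓ) := by
  have mk_eq_one : ∀ r ∈ rels m n ℓ, PresentedGroup.mk (rels m n ℓ) r = 1 :=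
    fun _ => PresentedGroup.one_of_mem
  constructor
  · rw [← pow_two]
    exact mk_eq_one (.of .t ^ 2) (by simp [rels])
  · exact mk_eq_one (.of .x ^ (n / 2)) (by simp [rels])
  · exact mul_inv_eq_one.1 <|
      mk_eq_one (.of .y ^ m * (.of .x ^ ((ℓ + m) / 2))⁻¹) (by simp [rels])
  · exact mul_inv_eq_iff_eq_mul.1 <| eq_inv_of_mul_eq_one_left <|
      mk_eq_one (.of .t * .of .x * (.of .t)⁻¹ * .of .x) (by simp [rels])
  · exact mul_inv_eq_iff_eq_mul.1 <| eq_inv_of_mul_eq_one_left <|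
      mk_eq_one (.of .t * .of .y * (.of .t)⁻¹ * .of .y) (by simp [rels])
  · exact mul_inv_eq_iff_eq_mul.1 <| mul_inv_eq_one.1 <|
      mk_eq_one (.of .x * .of .y * (.of .x)⁻¹ * (.of .y)⁻¹) (by simp [rels])

lemma G.hom_ext {f g : G m n ℓ →* H}
    (ht : f (gent m n ℓ) = g (gent m n ℓ)) (hx : f (genx m n ℓ) = g (genx m n ℓ))
    (hy : f (geny m n ℓ) = g (geny m n ℓ)) : f = g :=
  PresentedGroup.ext fun
    | .t => ht
    | .x => hx
    | .y => hy

lemma IsDihedralTriple.exists_hom {t x y : H}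
    (h : IsDihedralTriple m (n / 2) ((ℓ + m) / 2) t x y) :
    ∃ f : G m n ℓ →* H, f (gent m n ℓ) = t ∧ f (genx m n ℓ) = x ∧ f (geny m n ℓ) = y := by
  let image : Gen → H
    | .t => t
    | .x => x
    | .y => y
  have lift_rels : ∀ r ∈ rels m n ℓ, FreeGroup.lift image r = 1 := by
    rintro r (rfl | rfl | rfl | rfl | rfl | rfl)
    · simp [image, pow_two, h.mul_self]
    · simp [image, h.pow_x]
    · simp [image, h.pow_y]
    · simp [image, h.conj_x.eq]
    · simp [image, h.conj_y.eq]
    · simp [image, h.comm.eq]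
  exact ⟨PresentedGroup.toGroup lift_rels, PresentedGroup.toGroup.of lift_rels,
    PresentedGroup.toGroup.of lift_rels, PresentedGroup.toGroup.of lift_rels⟩

/-- The elements `t`, `tx`, `ty` of the connection set, as a family. -/
def connectionFamily (m n ℓ : ℕ) : Fin 3 → G m n ℓ :=
  ![gent m n ℓ, gent m n ℓ * genx m n ℓ, gent m n ℓ * geny m n ℓ]

lemma range_connectionFamily (m n ℓ : ℕ) : Set.range (connectionFamily m n ℓ) = S m n ℓ := by
  rw [connectionFamily, Matrix.range_cons, Matrix.range_cons_cons_empty]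
  rfl

lemma closure_S (m n ℓ : ℕ) : Subgroup.closure (S m n ℓ) = ⊤ := by
  have t_mem : gent m n ℓ ∈ Subgroup.closure (S m n ℓ) :=
    Subgroup.subset_closure (by simp [S])
  rw [eq_top_iff, ← PresentedGroup.closure_range_of, Subgroup.closure_le]
  rintro _ ⟨_ | _ | _, rfl⟩
  · exact t_mem
  · exact (Subgroup.mul_mem_cancel_left _ t_mem).1 (Subgroup.subset_closure (.inr (.inl rfl)))
  · exact (Subgroup.mul_mem_cancel_left _ t_mem).1 (Subgroup.subset_closure (.inr (.inr rfl)))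

lemma connectionFamily_injective_iff :
    Function.Injective (connectionFamily m n ℓ) ↔
      genx m n ℓ ≠ 1 ∧ geny m n ℓ ≠ 1 ∧ genx m n ℓ ≠ geny m n ℓ := by
  simp only [connectionFamily, Matrix.vecCons, Fin.cons_injective_iff]
  simpa [Function.injective_of_subsingleton, and_assoc] using and_left_comm

lemma exists_mulAut_iff_of_involutive {t x y : G m n ℓ}
    (hinv : ∀ f : G m n ℓ →* G m n ℓ, f (gent m n ℓ) = t → f (genx m n ℓ) = x →
      f (geny m n ℓ) = y → f t = gent m n ℓ ∧ f x = genx m n ℓ ∧ f y = geny m n ℓ) :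
    (∃ φ : MulAut (G m n ℓ), φ (gent m n ℓ) = t ∧ φ (genx m n ℓ) = x ∧ φ (geny m n ℓ) = y) ↔
      IsDihedralTriple m (n / 2) ((ℓ + m) / 2) t x y := by
  constructor
  · rintro ⟨φ, rfl, rfl, rfl⟩
    exact (isDihedralTriple_gen m n ℓ).map φ.toMonoidHom
  · intro h
    obtain ⟨f, ft, fx, fy⟩ := h.exists_hom
    obtain ⟨ft', fx', fy'⟩ := hinv f ft fx fy
    have comp_self : f.comp f = MonoidHom.id _ := G.hom_ext
      (by rw [MonoidHom.comp_apply, ft, ft', MonoidHom.id_apply])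
      (by rw [MonoidHom.comp_apply, fx, fx', MonoidHom.id_apply])
      (by rw [MonoidHom.comp_apply, fy, fy', MonoidHom.id_apply])
    exact ⟨f.toMulEquiv f comp_self comp_self, ft, fx, fy⟩

lemma swap_one_two_mem_inducedPerms_connectionFamily :
    Equiv.swap 1 2 ∈ inducedPerms (connectionFamily m n ℓ) ↔
      geny m n ℓ ^ (n / 2) = 1 ∧ genx m n ℓ ^ m = geny m n ℓ ^ ((ℓ + m) / 2) := by
  rw [← (isDihedralTriple_gen m n ℓ).swap_iff,
    ← exists_mulAut_iff_of_involutive fun f ft fx fy => ⟨ft, fy, fx⟩, mem_inducedPerms]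
  refine exists_congr fun φ => ?_
  simp +contextual [Fin.forall_fin_succ, connectionFamily, Equiv.swap_apply_def]

lemma swap_zero_one_mem_inducedPerms_connectionFamily :
    Equiv.swap 0 1 ∈ inducedPerms (connectionFamily m n ℓ) ↔
      genx m n ℓ ^ (2 * ((ℓ + m) / 2)) = genx m n ℓ ^ m := by
  rw [← (isDihedralTriple_gen m n ℓ).mul_left_iff,
    ← exists_mulAut_iff_of_involutive fun f ft fx fy => by simp [ft, fx, fy], mem_inducedPerms]
  refine exists_congr fun φ => ?_
  simp +contextual [Fin.forall_fin_succ, connectionFamily, Equiv.swap_apply_def, mul_assoc,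
    ← eq_inv_mul_iff_mul_eq]

theorem nonempty_autFixing_mulEquiv_perm_iff (m n ℓ : ℕ) :
    Nonempty (autFixing (G m n ℓ) (S m n ℓ) ≃* Equiv.Perm (Fin 3)) ↔
      (genx m n ℓ ≠ 1 ∧ geny m n ℓ ≠ 1 ∧ genx m n ℓ ≠ geny m n ℓ) ∧
        genx m n ℓ ^ (2 * ((ℓ + m) / 2)) = genx m n ℓ ^ m ∧
        geny m n ℓ ^ (n / 2) = 1 ∧ genx m n ℓ ^ m = geny m n ℓ ^ ((ℓ + m) / 2) := by
  have closure_range : Subgroup.closure (Set.range (connectionFamily m n ℓ)) = ⊤ := by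
    rw [range_connectionFamily, closure_S]
  rw [← range_connectionFamily, autFixing.nonempty_mulEquiv_perm_iff closure_range,
    connectionFamily_injective_iff, subgroup_perm_fin_eq_top_iff, Fin.forall_fin_two]
  exact and_congr_right' (and_congr swap_zero_one_mem_inducedPerms_connectionFamily
    swap_one_two_mem_inducedPerms_connectionFamily)

/-- The two divisibility conditions are read off in the quotients `ZMod m` and `ZMod (m * (n / 2))`
of `⟨x, y⟩`, where `(x, y)` goes to `(0, 1)` and `(m, (ℓ + m) / 2)` respectively. -/
lemma genx_zpow_mul_geny_zpow_eq_one_iff (hm : 0 < m) (i j : ℤ) :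
    genx m n ℓ ^ i * geny m n ℓ ^ j = 1 ↔
      (m : ℤ) ∣ j ∧ (m * (n / 2 : ℕ) : ℤ) ∣ m * i + ((ℓ + m) / 2 : ℕ) * j := by
  constructor
  · intro h
    have eq_zero_of_rels : ∀ (N : ℕ) (u v : ZMod N), (n / 2) • u = 0 →
        m • v = ((ℓ + m) / 2) • u → i • u + j • v = 0 := by
      intro N u v hu hv
      obtain ⟨f, -, fx, fy⟩ := (IsDihedralTriple.of_addCommGroup hu hv).exists_hom
      simpa [fx, fy] using Equiv.congr_fun (congrArg f h) 0
    have zmod_m := eq_zero_of_rels m 0 1 (by simp) (by simp)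
    have zmod_mul := eq_zero_of_rels (m * (n / 2)) m ((ℓ + m) / 2 : ℕ)
      (by rw [nsmul_eq_mul, ← Nat.cast_mul, mul_comm, ZMod.natCast_self])
      (by rw [nsmul_eq_mul, nsmul_eq_mul]; exact mul_comm _ _)
    refine ⟨by simpa [ZMod.intCast_zmod_eq_zero_iff_dvd] using zmod_m, ?_⟩
    rw [← Nat.cast_mul, ← ZMod.intCast_zmod_eq_zero_iff_dvd]
    simpa [mul_comm, -Int.natCast_ediv] using zmod_mul
  · rintro ⟨⟨q, rfl⟩, hq⟩
    rw [mul_left_comm, ← mul_add, mul_dvd_mul_iff_left (by exact_mod_cast hm.ne')] at hq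
    obtain ⟨p, hp⟩ := hq
    have gen := isDihedralTriple_gen m n ℓ
    rw [zpow_mul, zpow_natCast, gen.pow_y, ← zpow_natCast, ← zpow_mul, ← zpow_add, hp, zpow_mul,
      zpow_natCast, gen.pow_x, one_zpow]

lemma genx_zpow_eq_one_iff (hm : 0 < m) (i : ℤ) :
    genx m n ℓ ^ i = 1 ↔ ((n / 2 : ℕ) : ℤ) ∣ i := by
  have h := genx_zpow_mul_geny_zpow_eq_one_iff (n := n) (ℓ := ℓ) hm i 0
  rwa [zpow_zero, mul_one, mul_zero, add_zero, and_iff_right (dvd_zero _),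
    mul_dvd_mul_iff_left (by exact_mod_cast hm.ne')] at h

lemma geny_zpow_eq_one_iff (hm : 0 < m) (j : ℤ) :
    geny m n ℓ ^ j = 1 ↔
      (m : ℤ) ∣ j ∧ (m * (n / 2 : ℕ) : ℤ) ∣ ((ℓ + m) / 2 : ℕ) * j := by
  have h := genx_zpow_mul_geny_zpow_eq_one_iff (n := n) (ℓ := ℓ) hm 0 j
  rwa [zpow_zero, one_mul, mul_zero, zero_add] at h

end Presentation

lemma eq_one_or_eq_three_of_dvd {q b : ℤ} (hq : 0 < q) (hqb : q + 1 = 2 * b)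
    (h : q ∣ 1 - b ^ 2) : q = 1 ∨ q = 3 := by
  have q_dvd_three : q ∣ 3 := by
    have three_eq : 3 = 4 * (1 - b ^ 2) + q * (q + 2) := by
      linear_combination -(q + 1 + 2 * b) * hqb
    exact three_eq ▸ (h.mul_left 4).add (dvd_mul_right q _)
  have q_le_three : q ≤ 3 := Int.le_of_dvd three_pos q_dvd_three
  interval_cases q <;> omega

lemma dvd_and_dvd_sq_sub_sq_iff {m k a ℓ : ℤ} (hm : 0 < m) (hl : 0 ≤ ℓ) (hlk : ℓ < 2 * k)
    (ha : ℓ + m = 2 * a) :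
    (k ∣ ℓ ∧ m ∣ k ∧ m ∣ a ∧ m * k ∣ m ^ 2 - a ^ 2) ↔ k = ℓ ∧ (ℓ = m ∨ ℓ = 3 * m) := by
  constructor
  · rintro ⟨⟨p, rfl⟩, ⟨q, rfl⟩, ⟨b, rfl⟩, h⟩
    have k_pos : 0 < m * q := by linarith
    have q_pos : 0 < q := (mul_pos_iff_of_pos_left hm).1 k_pos
    have hb : q * p + 1 = 2 * b := mul_left_cancel₀ hm.ne' (by linear_combination ha)
    have p_eq_one : p = 1 := by
      have p_nonneg : 0 ≤ p := nonneg_of_mul_nonneg_right hl k_pos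
      have p_lt_two : p < 2 := lt_of_mul_lt_mul_left (by linarith) k_pos.le
      have p_ne_zero : p ≠ 0 := by
        rintro rfl
        omega
      omega
    subst p_eq_one
    have q_dvd : q ∣ 1 - b ^ 2 := by
      rwa [show m * (m * q) = m ^ 2 * q by ring,
        show m ^ 2 - (m * b) ^ 2 = m ^ 2 * (1 - b ^ 2) by ring,
        mul_dvd_mul_iff_left (pow_pos hm 2).ne'] at h
    rcases eq_one_or_eq_three_of_dvd q_pos (by simpa using hb) q_dvd with rfl | rfl
    · simp
    · simp [mul_comm]
  · rintro ⟨rfl, rfl | rfl⟩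
    · obtain rfl : a = k := by omega
      simp
    · obtain rfl : a = 2 * m := by omega
      exact ⟨dvd_rfl, ⟨3, by ring⟩, ⟨2, by ring⟩, ⟨-1, by ring⟩⟩

section Parameters

variable {m n ℓ : ℕ}

lemma swap_relations_iff (hm : 0 < m) (hne : Even n) (hl : ℓ < n) (hpar : ℓ % 2 = m % 2) :
    (genx m n ℓ ^ (2 * ((ℓ + m) / 2)) = genx m n ℓ ^ m ∧
      geny m n ℓ ^ (n / 2) = 1 ∧ genx m n ℓ ^ m = geny m n ℓ ^ ((ℓ + m) / 2)) ↔
      n = 2 * ℓ ∧ (ℓ = m ∨ ℓ = 3 * m) := by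
  obtain ⟨k, hk⟩ : ∃ k, n / 2 = k := ⟨_, rfl⟩
  obtain ⟨a, ha⟩ : ∃ a, (ℓ + m) / 2 = a := ⟨_, rfl⟩
  have hn : n = 2 * k := by have := Nat.even_iff.1 hne; omega
  have hlm : 2 * a = ℓ + m := by omega
  have x_iff : genx m n ℓ ^ (2 * a) = genx m n ℓ ^ m ↔ (k : ℤ) ∣ ℓ := by
    rw [hlm, pow_add, mul_eq_right, ← zpow_natCast, genx_zpow_eq_one_iff hm, hk]
  have y_iff : geny m n ℓ ^ k = 1 ↔ (m : ℤ) ∣ k ∧ (m : ℤ) ∣ a := by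
    rw [← zpow_natCast, geny_zpow_eq_one_iff hm, hk, ha, mul_dvd_mul_iff_right]
    omega
  have xy_iff : genx m n ℓ ^ m = geny m n ℓ ^ a ↔
      (m : ℤ) ∣ a ∧ (m * k : ℤ) ∣ m ^ 2 - a ^ 2 := by
    rw [← mul_inv_eq_one, ← zpow_natCast, ← zpow_natCast, ← zpow_neg,
      genx_zpow_mul_geny_zpow_eq_one_iff hm, hk, ha, dvd_neg, mul_neg, ← sub_eq_add_neg, pow_two,
      pow_two]
  rw [hk, ha, x_iff, y_iff, xy_iff]
  calc ((k : ℤ) ∣ ℓ ∧ ((m : ℤ) ∣ k ∧ (m : ℤ) ∣ a) ∧ (m : ℤ) ∣ a ∧ (m * k : ℤ) ∣ m ^ 2 - a ^ 2)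
    _ ↔ ((k : ℤ) ∣ ℓ ∧ (m : ℤ) ∣ k ∧ (m : ℤ) ∣ a ∧ (m * k : ℤ) ∣ m ^ 2 - a ^ 2) := by
      rw [and_assoc, and_self_left]
    _ ↔ (k : ℤ) = ℓ ∧ ((ℓ : ℤ) = m ∨ (ℓ : ℤ) = 3 * m) :=
      dvd_and_dvd_sq_sub_sq_iff (by omega) (by omega) (by omega) (by omega)
    _ ↔ n = 2 * ℓ ∧ (ℓ = m ∨ ℓ = 3 * m) := by omega

lemma genx_ne_one (hm : 0 < m) (hn : 4 ≤ n) : genx m n ℓ ≠ 1 := by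
  rw [← zpow_one (genx m n ℓ), Ne, genx_zpow_eq_one_iff hm]
  intro h
  have := Int.le_of_dvd one_pos h
  omega

lemma geny_ne_one (hm : 0 < m) (hn : 4 ≤ n) (hnl : n = 2 * ℓ) (hl : ℓ = m ∨ ℓ = 3 * m) :
    geny m n ℓ ≠ 1 := by
  rw [← zpow_one (geny m n ℓ), Ne, geny_zpow_eq_one_iff hm]
  rintro ⟨hm1, h⟩
  obtain rfl : m = 1 := by exact_mod_cast Int.eq_one_of_dvd_one (by omega) hm1
  obtain ⟨rfl, rfl⟩ : ℓ = 3 ∧ n = 6 := by omega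
  norm_num at h

lemma genx_ne_geny (hm : 0 < m) (hn : 4 ≤ n) (hnl : n = 2 * ℓ) (hl : ℓ = m ∨ ℓ = 3 * m) :
    genx m n ℓ ≠ geny m n ℓ := by
  rw [← zpow_one (genx m n ℓ), ← zpow_one (geny m n ℓ), Ne, ← mul_inv_eq_one, ← zpow_neg,
    genx_zpow_mul_geny_zpow_eq_one_iff hm, dvd_neg]
  rintro ⟨hm1, h⟩
  obtain rfl : m = 1 := by exact_mod_cast Int.eq_one_of_dvd_one (by omega) hm1
  obtain ⟨rfl, rfl⟩ : ℓ = 3 ∧ n = 6 := by omega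
  norm_num at h

end Parameters

/-- **Corollary 4.5.** `Aut(G; {t,tx,ty}) ≅ S₃` iff `n = 2ℓ` and either `ℓ = m` or
`ℓ = 3m`. -/
theorem statement11 (m n ℓ : ℕ) (hm : 0 < m) (hn : 4 ≤ n) (hne : Even n)
    (hl : ℓ ≤ n - 1) (hpar : ℓ % 2 = m % 2) :
    Nonempty (autFixing (G m n ℓ) (S m n ℓ) ≃* Equiv.Perm (Fin 3)) ↔
      (n = 2 * ℓ ∧ (ℓ = m ∨ ℓ = 3 * m)) := by
  rw [nonempty_autFixing_mulEquiv_perm_iff, swap_relations_iff hm hne (by omega) hpar]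
  exact and_iff_right_of_imp fun ⟨hnl, hlm⟩ =>
    ⟨genx_ne_one hm hn, geny_ne_one hm hn hnl hlm, genx_ne_geny hm hn hnl hlm⟩

end HTGPaper
end

section
/- Let m and n be positive integers with n ≥ 4 even, let 0 ≤ ℓ ≤ n−1 be an integer of the same parity as m, and let Γ = HTG(m,n,ℓ) with edge color classes R, B, Gr. Then either every automorphism of Γ that fixes setwise at least one of the sets R, B and Gr is color permuting, or mn is divisible by 4 and Γ is isomorphic to the generalized prism GPr(mn/4). -/
namespace HTGPaper

/-!
An automorphism that fixes the colour class of `a` either preserves or swaps the colours `b` and `c`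
at each vertex. Comparing the images of the closed hexagons with colours `abcabc` shows that all
vertices make the same choice, unless `b` and `c` commute. If they do and `b ≠ c`, then
`z = b * c` is a central involution, and the cosets of `{1, z}`, visited in the order
`1, b, b * a, b * a * b, …`, are the fibres of a generalized prism over its second coordinate.
-/

section Cayley

variable {H : Type*} [Group H]

/-- The edges of a Cayley graph coloured by the connection element `s`; the set `T` of all colours
of `cayley H T` gives the partition `colorClass '' T` of the edges. -/
def colorClass (s : H) : Set (Sym2 H) := {e | ∃ g, e = s(g, g * s)}

/-- The map `f` between groups preserves the colours in `T` of the edges of the Cayley graph at the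
vertex `g`. -/
def PreservesColorsAt (T : Set H) (f : H → H) (g : H) : Prop := ∀ s ∈ T, f (g * s) = f g * s

theorem image_colorClass_eq_iff {f : H → H} (hf : f.Surjective) {s u : H} (hu : u * u = 1) :
    Sym2.map f '' colorClass s = colorClass u ↔ ∀ g, f (g * s) = f g * u := by
  refine ⟨fun h g => ?_, fun h => Set.ext fun e => ⟨?_, ?_⟩⟩
  · obtain ⟨k, hk⟩ : s(f g, f (g * s)) ∈ colorClass u := h ▸ ⟨_, ⟨g, rfl⟩, rfl⟩
    obtain ⟨h₁, h₂⟩ | ⟨h₁, h₂⟩ := Sym2.eq_iff.1 hk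
    · rw [h₁, h₂]
    · rw [h₁, h₂, mul_assoc, hu, mul_one]
  · rintro ⟨_, ⟨g, rfl⟩, rfl⟩
    exact ⟨f g, by rw [Sym2.map_mk, h]⟩
  · rintro ⟨k, rfl⟩
    obtain ⟨g, rfl⟩ := hf k
    exact ⟨_, ⟨g, rfl⟩, by rw [Sym2.map_mk, h]⟩

variable {T : Set H}

theorem cayley_adj (hT : ∀ s ∈ T, s * s = 1) {g h : H} :
    (cayley H T).Adj g h ↔ g ≠ h ∧ ∃ s ∈ T, h = g * s := by
  have mul_comm_edge (s : H) (hs : s ∈ T) : g = h * s ↔ h = g * s := by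
    rw [← mul_inv_eq_iff_eq_mul, inv_eq_of_mul_eq_one_left (hT s hs), eq_comm]
  simp only [cayley, SimpleGraph.fromRel_adj]
  refine and_congr_right fun _ => or_iff_left_of_imp ?_
  rintro ⟨s, hs, h⟩
  exact ⟨s, hs, (mul_comm_edge s hs).1 h⟩

theorem exists_mem_map_mul (hT : ∀ s ∈ T, s * s = 1) (f : cayley H T ≃g cayley H T) (g : H) {s : H}
    (hs : s ∈ T) : ∃ u ∈ T, f (g * s) = f g * u := by
  by_cases hs₁ : s = 1
  · exact ⟨s, hs, by simp [hs₁]⟩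
  · have hadj : (cayley H T).Adj g (g * s) := (cayley_adj hT).2 ⟨by simpa using hs₁, s, hs, rfl⟩
    exact ((cayley_adj hT).1 (f.map_adj_iff.2 hadj)).2

theorem forall_of_closure_eq_top (hT : ∀ s ∈ T, s * s = 1) (htop : Subgroup.closure T = ⊤)
    {P : H → Prop} (one : P 1) (mul_right : ∀ g, P g → ∀ s ∈ T, P (g * s)) (g : H) : P g := by
  have hg : g ∈ Subgroup.closure T := htop ▸ Subgroup.mem_top g
  induction hg using Subgroup.closure_induction_right with
  | one => exact one
  | mul_right g _ s hs ih => exact mul_right g ih s hs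
  | mul_inv_cancel g _ s hs ih =>
    rw [inv_eq_of_mul_eq_one_left (hT s hs)]
    exact mul_right g ih s hs

end Cayley

/-- The connection set `T = {a, b, c}` of a cubic Cayley graph of hexagonal type: `a`, `b`, `c` are
involutions generating the group, the walks with colours `abcabc` close up, and the graph is
bipartite, the parts being the fibres of a sign character. -/
structure IsHexagonalTriple {H : Type*} [Group H] (T : Set H) (a b c : H) : Prop where
  eq_insert : T = {a, b, c}
  mul_self : ∀ s ∈ T, s * s = 1
  hexagon : (a * b * c) ^ 2 = 1
  closure_eq_top : Subgroup.closure T = ⊤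
  exists_sign : ∃ ε : H →* ℤˣ, ∀ s ∈ T, ε s = -1

namespace IsHexagonalTriple

variable {H : Type*} [Group H] {T : Set H} {a b c : H}

theorem rotate (h : IsHexagonalTriple T a b c) : IsHexagonalTriple T b c a where
  eq_insert := by rw [h.eq_insert, Set.insert_comm, Set.pair_comm]
  mul_self := h.mul_self
  hexagon := calc
    (b * c * a) ^ 2 = a⁻¹ * (a * b * c) ^ 2 * a := by simp only [sq]; group
    _ = 1 := by simp [h.hexagon]
  closure_eq_top := h.closure_eq_top
  exists_sign := h.exists_sign

theorem exists_rotation (h : IsHexagonalTriple T a b c) {s : H} (hs : s ∈ T) :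
    ∃ b' c', IsHexagonalTriple T s b' c' := by
  rw [h.eq_insert] at hs
  obtain rfl | rfl | rfl := hs
  exacts [⟨_, _, h⟩, ⟨_, _, h.rotate⟩, ⟨_, _, h.rotate.rotate⟩]

theorem mem_iff (h : IsHexagonalTriple T a b c) {s : H} : s ∈ T ↔ s = a ∨ s = b ∨ s = c := by
  simp [h.eq_insert]

theorem fst_mem (h : IsHexagonalTriple T a b c) : a ∈ T := by simp [h.mem_iff]

theorem snd_mem (h : IsHexagonalTriple T a b c) : b ∈ T := h.rotate.fst_mem

theorem thd_mem (h : IsHexagonalTriple T a b c) : c ∈ T := h.rotate.rotate.fst_mem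

theorem inv_eq_self (h : IsHexagonalTriple T a b c) {s : H} (hs : s ∈ T) : s⁻¹ = s :=
  inv_eq_of_mul_eq_one_left (h.mul_self s hs)

theorem swap (h : IsHexagonalTriple T a b c) : IsHexagonalTriple T a c b where
  eq_insert := by rw [h.eq_insert, Set.pair_comm]
  mul_self := h.mul_self
  hexagon := by
    rw [← inv_inj, ← inv_pow]
    simpa [h.inv_eq_self, h.fst_mem, h.snd_mem, h.thd_mem, mul_assoc] using h.rotate.hexagon
  closure_eq_top := h.closure_eq_top
  exists_sign := h.exists_sign

theorem mul_mul_self (h : IsHexagonalTriple T a b c) {s : H} (hs : s ∈ T) (g : H) :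
    g * s * s = g := by
  rw [mul_assoc, h.mul_self s hs, mul_one]

theorem mul_mul_mul_eq (h : IsHexagonalTriple T a b c) : a * b * c * a = c * b := by
  have hcb : c * b = (b * c)⁻¹ := by
    rw [mul_inv_rev, h.inv_eq_self h.snd_mem, h.inv_eq_self h.thd_mem]
  rw [hcb, eq_inv_iff_mul_eq_one, ← h.hexagon, sq]
  group

variable {f : cayley H T ≃g cayley H T}

theorem preservesColorsAt_or_swap (h : IsHexagonalTriple T a b c) (hf : ∀ g, f (g * a) = f g * a)
    (g : H) : PreservesColorsAt T f g ∨ (f (g * b) = f g * c ∧ f (g * c) = f g * b) := by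
  have map_inj (s u : H) (hsu : f (g * s) = f (g * u)) : s = u := mul_left_cancel (f.injective hsu)
  obtain ⟨u, hu, hfb⟩ := exists_mem_map_mul h.mul_self f g h.snd_mem
  obtain ⟨v, hv, hfc⟩ := exists_mem_map_mul h.mul_self f g h.thd_mem
  rw [h.mem_iff] at hu hv
  grind [PreservesColorsAt, h.mem_iff]

theorem preservesColorsAt_mul_snd (h : IsHexagonalTriple T a b c) (hf : ∀ g, f (g * a) = f g * a)
    (hbc : b ≠ c) {g : H} (hg : PreservesColorsAt T f g) : PreservesColorsAt T f (g * b) := by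
  refine (h.preservesColorsAt_or_swap hf (g * b)).resolve_right fun ⟨hswap, _⟩ => hbc ?_
  rw [h.mul_mul_self h.snd_mem, hg b h.snd_mem, mul_assoc, left_eq_mul] at hswap
  rw [← h.inv_eq_self h.thd_mem, eq_inv_of_mul_eq_one_left hswap]

theorem preservesColorsAt_mul_fst (h : IsHexagonalTriple T a b c) (hf : ∀ g, f (g * a) = f g * a)
    (hbc : ¬ Commute b c) {g : H} (hg : PreservesColorsAt T f g) :
    PreservesColorsAt T f (g * a) := by
  have hne : b ≠ c := fun hbc' => hbc (hbc' ▸ Commute.refl b)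
  by_contra hga
  have hgab : ¬ PreservesColorsAt T f (g * a * b) := fun hgab =>
    hga (h.mul_mul_self h.snd_mem (g * a) ▸ h.preservesColorsAt_mul_snd hf hne hgab)
  have hgc : PreservesColorsAt T f (g * c) := h.swap.preservesColorsAt_mul_snd hf hne.symm hg
  have hswap := ((h.preservesColorsAt_or_swap hf (g * a)).resolve_left hga).1
  have hswap' := ((h.preservesColorsAt_or_swap hf (g * a * b)).resolve_left hgab).2
  have hmap : f g * (a * c * b * a) = f g * (a * b * c * a) := calc
    f g * (a * c * b * a) = f (g * a * b * c * a) := by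
      rw [hf, hswap', hswap, hf]; simp only [mul_assoc]
    _ = f (g * c * b) := by rw [mul_assoc g c, ← h.mul_mul_mul_eq]; simp only [mul_assoc]
    _ = f g * (a * b * c * a) := by
      rw [hgc b h.snd_mem, hg c h.thd_mem, mul_assoc, h.mul_mul_mul_eq]
  simp only [mul_right_inj, mul_left_inj, mul_assoc a] at hmap
  exact hbc hmap.symm

theorem preservesColorsAt_iff (h : IsHexagonalTriple T a b c) (hf : ∀ g, f (g * a) = f g * a)
    (hbc : ¬ Commute b c) (g : H) : PreservesColorsAt T f g ↔ PreservesColorsAt T f 1 := by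
  have hne : b ≠ c := fun hbc' => hbc (hbc' ▸ Commute.refl b)
  have mul_right (g : H) (hg : PreservesColorsAt T f g) (s : H) (hs : s ∈ T) :
      PreservesColorsAt T f (g * s) := by
    obtain rfl | rfl | rfl := h.mem_iff.1 hs
    exacts [h.preservesColorsAt_mul_fst hf hbc hg, h.preservesColorsAt_mul_snd hf hne hg,
      h.swap.preservesColorsAt_mul_snd hf hne.symm hg]
  induction g using forall_of_closure_eq_top h.mul_self h.closure_eq_top with
  | one => rfl
  | mul_right g ih s hs =>
    exact Iff.trans
      ⟨fun hgs => h.mul_mul_self hs g ▸ mul_right _ hgs s hs, fun hg => mul_right g hg s hs⟩ ih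

theorem exists_image_colorClass_eq (h : IsHexagonalTriple T a b c) (hbc : Commute b c → b = c)
    (hfa : Sym2.map f '' colorClass a = colorClass a) {s : H} (hs : s ∈ T) :
    ∃ u ∈ T, Sym2.map f '' colorClass s = colorClass u := by
  have hf := (image_colorClass_eq_iff f.surjective (h.mul_self a h.fst_mem)).1 hfa
  suffices ∃ u ∈ T, ∀ g, f (g * s) = f g * u from this.imp fun u ⟨hu, hfu⟩ =>
    ⟨hu, (image_colorClass_eq_iff f.surjective (h.mul_self u hu)).2 hfu⟩
  by_cases hcomm : Commute b c
  · obtain rfl := hbc hcomm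
    have hpres (g : H) : PreservesColorsAt T f g := by
      obtain hg | ⟨hg, _⟩ := h.preservesColorsAt_or_swap hf g
      · exact hg
      · intro s hs
        obtain rfl | rfl | rfl := h.mem_iff.1 hs
        exacts [hf g, hg, hg]
    exact ⟨s, hs, fun g => hpres g s hs⟩
  by_cases hpres : PreservesColorsAt T f 1
  · exact ⟨s, hs, fun g => (h.preservesColorsAt_iff hf hcomm g).2 hpres s hs⟩
  have hswap (g : H) := (h.preservesColorsAt_or_swap hf g).resolve_left
    (mt (h.preservesColorsAt_iff hf hcomm g).1 hpres)
  obtain rfl | rfl | rfl := h.mem_iff.1 hs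
  exacts [⟨_, hs, hf⟩, ⟨c, h.thd_mem, fun g => (hswap g).1⟩, ⟨b, h.snd_mem, fun g => (hswap g).2⟩]

end IsHexagonalTriple

theorem exists_zpow_mem_iff_dvd {H : Type*} [Group H] (Z : Subgroup H) (x : H) :
    ∃ K : ℕ, ∀ k : ℤ, x ^ k ∈ Z ↔ (K : ℤ) ∣ k := by
  refine ⟨Function.minimalPeriod (x • ·) ((1 : H) : H ⧸ Z), fun k => ?_⟩
  rw [← MulAction.zpow_smul_eq_iff_minimalPeriod_dvd, MulAction.Quotient.smul_coe, smul_eq_mul,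
    mul_one, eq_comm, QuotientGroup.eq, inv_one, one_mul]

theorem even_val_intCast (K : ℕ) (k : ℤ) : Even (k : ZMod (2 * K)).val ↔ Even k := by
  obtain rfl | hK := K.eq_zero_or_pos
  · exact Int.natAbs_even
  · have : NeZero (2 * K) := ⟨by omega⟩
    rw [← Int.even_coe_nat, ZMod.val_intCast, Int.even_iff, Int.even_iff,
      Int.emod_emod_of_dvd _ (by simp)]

theorem even_val_add_one {K : ℕ} {j : ZMod (2 * K)} : Even (j + 1).val ↔ ¬ Even j.val := by
  obtain ⟨k, rfl⟩ := ZMod.intCast_surjective j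
  rw [even_val_intCast, ← Int.even_add_one, ← even_val_intCast K, Int.cast_add, Int.cast_one]

theorem even_val_sub_one {K : ℕ} {j : ZMod (2 * K)} : Even (j - 1).val ↔ ¬ Even j.val := by
  rw [← not_iff_not, ← even_val_add_one, sub_add_cancel, not_not]

theorem even_val_iff_exists {K : ℕ} {j : ZMod (2 * K)} :
    Even j.val ↔ ∃ k : ℤ, j = ((2 * k : ℤ) : ZMod (2 * K)) := by
  refine ⟨fun hj => ?_, ?_⟩
  · obtain ⟨k, rfl⟩ := ZMod.intCast_surjective j
    obtain ⟨k, rfl⟩ := ((even_val_intCast K k).1 hj).two_dvd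
    exact ⟨k, rfl⟩
  · rintro ⟨k, rfl⟩
    exact (even_val_intCast K _).2 (even_two_mul k)

/-- The three neighbours in `GPr K` of a vertex `v` with `v.2` even. -/
def prismNeighbors (K : ℕ) (v : ZMod 2 × ZMod (2 * K)) : Set (ZMod 2 × ZMod (2 * K)) :=
  {(v.1, v.2 - 1), (v.1, v.2 + 1), (v.1 + 1, v.2 + 1)}

theorem GPr_adj {K : ℕ} {v w : ZMod 2 × ZMod (2 * K)} :
    (GPr K).Adj v w ↔
      (Even v.2.val ∧ w ∈ prismNeighbors K v) ∨ (Even w.2.val ∧ v ∈ prismNeighbors K w) := by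
  obtain ⟨i, j⟩ := v
  obtain ⟨i', j'⟩ := w
  simp only [GPr, SimpleGraph.fromRel_adj, prismNeighbors, Set.mem_insert_iff,
    Set.mem_singleton_iff, Prod.mk.injEq, ne_eq]
  have one_ne_zero : (1 : ZMod (2 * K)) ≠ 0 := fun h => by
    simpa [h] using even_val_add_one (j := (0 : ZMod (2 * K)))
  constructor
  · rintro ⟨-, (⟨rfl, rfl | rfl⟩ | ⟨hj, rfl, rfl⟩) | (⟨rfl, rfl | rfl⟩ | ⟨hj, rfl, rfl⟩)⟩ <;>
      simp [even_val_add_one, even_val_sub_one, -Nat.not_even_iff_odd, em, em', *]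
  · rintro (⟨hj, ⟨rfl, rfl⟩ | ⟨rfl, rfl⟩ | ⟨rfl, rfl⟩⟩ |
      ⟨hj, ⟨rfl, rfl⟩ | ⟨rfl, rfl⟩ | ⟨rfl, rfl⟩⟩) <;>
      simp [one_ne_zero, hj, eq_sub_iff_add_eq]

/-- A vertex of the Cayley graph over the second coordinate `j` of `GPr K`: it is `x ^ k` over
`j = 2k` and `x ^ k * a` over `j = 2k - 1`, where `0 ≤ k < K` if `K` is positive. -/
def prismSection {H : Type*} [Group H] (x a : H) (K : ℕ) (j : ZMod (2 * K)) : H :=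
  if Even j.val then x ^ ((j.cast : ℤ) / 2) else x ^ (((j + 1).cast : ℤ) / 2) * a

/-- The vertex map from `GPr K` to the Cayley graph of a hexagonal triple `a, b, c` in which `b`
and `c` commute: the first coordinate is moved by the central involution `b * c`. -/
def prismMap {H : Type*} [Group H] (a b c : H) (K : ℕ) (v : ZMod 2 × ZMod (2 * K)) : H :=
  prismSection (b * a) a K v.2 * (b * c) ^ v.1.val

theorem eq_one_or_eq_of_mem_zpowers {H : Type*} [Group H] {z w : H} (hz : z ^ 2 = 1)
    (hw : w ∈ Subgroup.zpowers z) : w = 1 ∨ w = z := by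
  obtain ⟨k, rfl⟩ := hw
  obtain hk | hk := Int.emod_two_eq_zero_or_one k <;>
    simp [zpow_eq_zpow_emod' k hz, hk]

theorem prismSection_two_mul {H : Type*} [Group H] (x a : H) (K : ℕ) (k : ℤ) :
    prismSection x a K ((2 * k : ℤ) : ZMod (2 * K)) = x ^ (k % K) := by
  rw [prismSection, if_pos ((even_val_intCast K _).2 (even_two_mul k)), ZMod.coe_intCast,
    Nat.cast_mul, Nat.cast_ofNat, Int.mul_emod_mul_of_pos _ _ two_pos,
    Int.mul_ediv_cancel_left _ two_ne_zero]

theorem prismSection_sub_one {H : Type*} [Group H] (x a : H) {K : ℕ} {j : ZMod (2 * K)}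
    (hj : Even j.val) : prismSection x a K (j - 1) = prismSection x a K j * a := by
  rw [prismSection, if_neg (mt even_val_sub_one.1 (not_not.2 hj)), sub_add_cancel, prismSection,
    if_pos hj]

namespace IsHexagonalTriple

variable {H : Type*} [Group H] {T : Set H} {a b c : H}

theorem sq_mul_eq_one (h : IsHexagonalTriple T a b c) (hbc : Commute b c) : (b * c) ^ 2 = 1 := by
  rw [hbc.mul_pow, sq, sq, h.mul_self b h.snd_mem, h.mul_self c h.thd_mem, one_mul]

theorem commute_mul (h : IsHexagonalTriple T a b c) (hbc : Commute b c) (g : H) :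
    Commute (b * c) g := by
  have hgen : T ⊆ Subgroup.centralizer {b * c} := by
    intro s hs
    rw [SetLike.mem_coe, Subgroup.mem_centralizer_singleton_iff]
    obtain rfl | rfl | rfl := h.mem_iff.1 hs
    · calc
        s * (b * c) = s * b * c * s * s := by rw [h.mul_mul_self hs, mul_assoc]
        _ = b * c * s := by rw [h.mul_mul_mul_eq, hbc.eq]
    · exact ((Commute.refl s).mul_left hbc.symm).symm
    · exact (hbc.mul_left (Commute.refl s)).symm
  have hg : g ∈ Subgroup.centralizer {b * c} :=
    (Subgroup.closure_le _).2 hgen (h.closure_eq_top ▸ Subgroup.mem_top g)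
  exact (Subgroup.mem_centralizer_singleton_iff.1 hg).symm

theorem orderOf_mul_eq_two (h : IsHexagonalTriple T a b c) (hbc : Commute b c) (hne : b ≠ c) :
    orderOf (b * c) = 2 := by
  refine orderOf_eq_prime (h.sq_mul_eq_one hbc) fun hone => hne ?_
  rw [eq_inv_of_mul_eq_one_left hone, h.inv_eq_self h.thd_mem]

variable {K : ℕ}

theorem prismMap_sub_one (h : IsHexagonalTriple T a b c) (hbc : Commute b c) (i : ZMod 2)
    {j : ZMod (2 * K)} (hj : Even j.val) :
    prismMap a b c K (i, j - 1) = prismMap a b c K (i, j) * a := by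
  simp only [prismMap]
  rw [prismSection_sub_one _ _ hj, mul_assoc, mul_assoc, ((h.commute_mul hbc a).pow_left i.val).eq]

theorem prismMap_add_one_fst (h : IsHexagonalTriple T a b c) (hbc : Commute b c) (i : ZMod 2)
    (j : ZMod (2 * K)) : prismMap a b c K (i + 1, j) = prismMap a b c K (i, j) * (b * c) := by
  simp only [prismMap]
  rw [mul_assoc, ← pow_succ, pow_eq_pow_mod (i.val + 1) (h.sq_mul_eq_one hbc), ZMod.val_add,
    ZMod.val_one]

theorem prismMap_add_one_snd (h : IsHexagonalTriple T a b c) (hbc : Commute b c)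
    (hK : ∀ k : ℤ, (b * a) ^ k ∈ Subgroup.zpowers (b * c) ↔ (K : ℤ) ∣ k) (i : ZMod 2)
    {j : ZMod (2 * K)} (hj : Even j.val) :
    prismMap a b c K (i, j + 1) = prismMap a b c K (i, j) * b ∨
      prismMap a b c K (i, j + 1) = prismMap a b c K (i, j) * c := by
  obtain ⟨k, rfl⟩ := even_val_iff_exists.1 hj
  obtain ⟨w, hw, hstep⟩ : ∃ w, (w = 1 ∨ w = b * c) ∧
      (b * a) ^ ((k + 1) % K) = (b * a) ^ (k % K) * (b * a) * w := by
    refine ⟨(b * a) ^ ((k + 1) % K - (k % K + 1)), eq_one_or_eq_of_mem_zpowers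
      (h.sq_mul_eq_one hbc) ((hK _).2 ?_), by simp only [← zpow_add_one, ← zpow_add]; congr; ring⟩
    exact (Int.ModEq.symm ((Int.mod_modEq _ _).trans ((Int.mod_modEq _ _).symm.add_right 1))).dvd
  have hodd : ((2 * k : ℤ) : ZMod (2 * K)) + 1 = ((2 * (k + 1) : ℤ) : ZMod (2 * K)) - 1 := by
    push_cast; ring
  rw [hodd, h.prismMap_sub_one hbc i ((even_val_intCast K _).2 (even_two_mul _))]
  have hmap : prismMap a b c K (i, ((2 * (k + 1) : ℤ) : ZMod (2 * K))) * a =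
      prismMap a b c K (i, ((2 * k : ℤ) : ZMod (2 * K))) * b * w := by
    have hcomm (g : H) : Commute ((b * c) ^ i.val) g := (h.commute_mul hbc g).pow_left _
    have hcomm' (g : H) : Commute w g := by
      obtain rfl | rfl := hw
      exacts [Commute.one_left g, h.commute_mul hbc g]
    simp only [prismMap, prismSection_two_mul, hstep]
    generalize (b * a) ^ (k % K) = y, (b * c) ^ i.val = z at hcomm ⊢
    calc y * (b * a) * w * z * a = y * b * (a * (w * z)) * a := by simp only [mul_assoc]
      _ = y * b * (w * z) := by
        rw [((hcomm' a).symm.mul_right (hcomm a).symm).eq, ← mul_assoc, h.mul_mul_self h.fst_mem]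
      _ = y * z * b * w := by
        rw [(hcomm' z).eq, ← mul_assoc, mul_assoc y, ← (hcomm b).eq, ← mul_assoc]
  obtain rfl | rfl := hw
  · exact Or.inl (by rw [hmap, mul_one])
  · exact Or.inr (by rw [hmap, ← mul_assoc, h.mul_mul_self h.snd_mem])

theorem map_prismMap_eq_one_iff (h : IsHexagonalTriple T a b c) (hbc : Commute b c) {ε : H →* ℤˣ}
    (hε : ∀ s ∈ T, ε s = -1) (v : ZMod 2 × ZMod (2 * K)) :
    ε (prismMap a b c K v) = 1 ↔ Even v.2.val := by
  have map_of_even (i : ZMod 2) {j : ZMod (2 * K)} (hj : Even j.val) :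
      ε (prismMap a b c K (i, j)) = 1 := by
    obtain ⟨k, rfl⟩ := even_val_iff_exists.1 hj
    rw [prismMap, prismSection_two_mul]
    simp [hε _ h.fst_mem, hε _ h.snd_mem, hε _ h.thd_mem]
  obtain ⟨i, j⟩ := v
  by_cases hj : Even j.val
  · simp only [map_of_even i hj, hj]
  · rw [← add_sub_cancel_right j 1, h.prismMap_sub_one hbc i (even_val_add_one.2 hj), map_mul,
      map_of_even i (even_val_add_one.2 hj), hε a h.fst_mem, add_sub_cancel_right]
    simpa using hj

theorem prismMap_inj_of_even (h : IsHexagonalTriple T a b c) (hbc : Commute b c) (hne : b ≠ c)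
    (hK : ∀ k : ℤ, (b * a) ^ k ∈ Subgroup.zpowers (b * c) ↔ (K : ℤ) ∣ k) {i i' : ZMod 2}
    {j j' : ZMod (2 * K)} (hj : Even j.val) (hj' : Even j'.val)
    (heq : prismMap a b c K (i, j) = prismMap a b c K (i', j')) : i = i' ∧ j = j' := by
  obtain ⟨k, rfl⟩ := even_val_iff_exists.1 hj
  obtain ⟨k', rfl⟩ := even_val_iff_exists.1 hj'
  simp only [prismMap, prismSection_two_mul] at heq
  have hmem : (b * a) ^ (k' % K - k % K) ∈ Subgroup.zpowers (b * c) := by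
    rw [sub_eq_neg_add, zpow_add, zpow_neg, eq_mul_inv_of_mul_eq heq.symm, mul_assoc,
      inv_mul_cancel_left]
    exact mul_mem (Subgroup.npow_mem_zpowers _ _) (inv_mem (Subgroup.npow_mem_zpowers _ _))
  have hmod : k % K = k' % K := by
    simpa [Int.ModEq] using Int.modEq_iff_dvd.2 ((hK _).1 hmem)
  rw [hmod, mul_right_inj] at heq
  have val_lt (i : ZMod 2) : i.val ∈ Set.Iio (orderOf (b * c)) := by
    rw [h.orderOf_mul_eq_two hbc hne]
    exact i.val_lt
  refine ⟨ZMod.val_injective 2 (pow_injOn_Iio_orderOf (val_lt i) (val_lt i') heq), ?_⟩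
  rw [ZMod.intCast_eq_intCast_iff, Nat.cast_mul]
  exact Int.ModEq.mul_left' hmod

theorem injective_prismMap (h : IsHexagonalTriple T a b c) (hbc : Commute b c) (hne : b ≠ c)
    (hK : ∀ k : ℤ, (b * a) ^ k ∈ Subgroup.zpowers (b * c) ↔ (K : ℤ) ∣ k) :
    (prismMap a b c K).Injective := by
  obtain ⟨ε, hε⟩ := h.exists_sign
  rintro ⟨i, j⟩ ⟨i', j'⟩ heq
  have hparity : Even j.val ↔ Even j'.val := by
    rw [← h.map_prismMap_eq_one_iff hbc hε (i, j), heq, h.map_prismMap_eq_one_iff hbc hε]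
  by_cases hj : Even j.val
  · exact Prod.ext_iff.2 (h.prismMap_inj_of_even hbc hne hK hj (hparity.1 hj) heq)
  · have hj₁ := even_val_add_one.2 hj
    have hj₁' := even_val_add_one.2 (mt hparity.2 hj)
    rw [← add_sub_cancel_right j 1, ← add_sub_cancel_right j' 1, h.prismMap_sub_one hbc i hj₁,
      h.prismMap_sub_one hbc i' hj₁', mul_left_inj] at heq
    simpa using h.prismMap_inj_of_even hbc hne hK hj₁ hj₁' heq

theorem image_prismNeighbors (h : IsHexagonalTriple T a b c) (hbc : Commute b c)
    (hK : ∀ k : ℤ, (b * a) ^ k ∈ Subgroup.zpowers (b * c) ↔ (K : ℤ) ∣ k)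
    {v : ZMod 2 × ZMod (2 * K)} (hv : Even v.2.val) :
    prismMap a b c K '' prismNeighbors K v = (prismMap a b c K v * ·) '' T := by
  obtain ⟨i, j⟩ := v
  have mul_snd : b * (b * c) = c := by rw [← mul_assoc, h.mul_self b h.snd_mem, one_mul]
  have mul_thd : c * (b * c) = b := by rw [hbc.eq, ← mul_assoc, h.mul_self c h.thd_mem, one_mul]
  simp only [prismNeighbors, h.eq_insert, Set.image_insert_eq, Set.image_singleton,
    h.prismMap_sub_one hbc i hv, h.prismMap_add_one_fst hbc]
  congr 1
  obtain hsnd | hsnd := h.prismMap_add_one_snd hbc hK i hv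
  · rw [hsnd, mul_assoc, mul_snd]
  · rw [hsnd, mul_assoc, mul_thd, Set.pair_comm]

theorem prismMap_mul_mem_range_of_odd (h : IsHexagonalTriple T a b c) (hbc : Commute b c)
    (hK : ∀ k : ℤ, (b * a) ^ k ∈ Subgroup.zpowers (b * c) ↔ (K : ℤ) ∣ k) (i : ZMod 2)
    {j : ZMod (2 * K)} (hj : ¬ Even j.val) {s : H} (hs : s ∈ T) :
    prismMap a b c K (i, j) * s ∈ Set.range (prismMap a b c K) := by
  have hnext : prismMap a b c K (i, j) = prismMap a b c K (i, j + 1) * a := by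
    rw [← h.prismMap_sub_one hbc i (even_val_add_one.2 hj), add_sub_cancel_right]
  have hprev := h.prismMap_add_one_snd hbc hK i (even_val_sub_one.2 hj)
  have hprev' := h.prismMap_add_one_fst hbc i (j - 1) (K := K)
  rw [sub_add_cancel] at hprev
  obtain rfl | rfl | rfl := h.mem_iff.1 hs
  · exact ⟨(i, j + 1), by rw [hnext, h.mul_mul_self hs]⟩
  · obtain hprev | hprev := hprev
    · exact ⟨(i, j - 1), by rw [hprev, h.mul_mul_self hs]⟩
    · exact ⟨(i + 1, j - 1), by rw [hprev, hprev', hbc.eq, mul_assoc]⟩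
  · obtain hprev | hprev := hprev
    · exact ⟨(i + 1, j - 1), by rw [hprev, hprev', mul_assoc]⟩
    · exact ⟨(i, j - 1), by rw [hprev, h.mul_mul_self hs]⟩

theorem surjective_prismMap (h : IsHexagonalTriple T a b c) (hbc : Commute b c)
    (hK : ∀ k : ℤ, (b * a) ^ k ∈ Subgroup.zpowers (b * c) ↔ (K : ℤ) ∣ k) :
    (prismMap a b c K).Surjective := by
  intro g
  induction g using forall_of_closure_eq_top h.mul_self h.closure_eq_top with
  | one => exact ⟨(0, ((2 * 0 : ℤ) : ZMod (2 * K))), by rw [prismMap, prismSection_two_mul]; simp⟩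
  | mul_right g ih s hs =>
    obtain ⟨⟨i, j⟩, rfl⟩ := ih
    by_cases hj : Even j.val
    · have himage : prismMap a b c K (i, j) * s ∈ prismMap a b c K '' prismNeighbors K (i, j) :=
        h.image_prismNeighbors hbc hK (v := (i, j)) hj ▸ ⟨s, hs, rfl⟩
      exact Set.image_subset_range _ _ himage
    · exact h.prismMap_mul_mem_range_of_odd hbc hK i hj hs

theorem cayley_adj_iff_sign (h : IsHexagonalTriple T a b c) {ε : H →* ℤˣ}
    (hε : ∀ s ∈ T, ε s = -1) {g g' : H} :
    (cayley H T).Adj g g' ↔ (ε g = 1 ∧ ∃ s ∈ T, g' = g * s) ∨ (ε g' = 1 ∧ ∃ s ∈ T, g = g' * s) := by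
  have ne_mul (g : H) {s : H} (hs : s ∈ T) : g ≠ g * s := fun heq => by
    simpa [hε s hs] using congrArg ε heq
  rw [cayley_adj h.mul_self]
  constructor
  · rintro ⟨-, s, hs, rfl⟩
    obtain hg | hg := Int.units_eq_one_or (ε g)
    · exact Or.inl ⟨hg, s, hs, rfl⟩
    · exact Or.inr ⟨by rw [map_mul, hg, hε s hs, neg_mul_neg, one_mul],
        s, hs, (h.mul_mul_self hs g).symm⟩
  · rintro (⟨-, s, hs, rfl⟩ | ⟨-, s, hs, rfl⟩)
    · exact ⟨ne_mul g hs, s, hs, rfl⟩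
    · exact ⟨(ne_mul g' hs).symm, s, hs, (h.mul_mul_self hs g').symm⟩

theorem exists_iso_GPr (h : IsHexagonalTriple T a b c) (hbc : Commute b c) (hne : b ≠ c) :
    ∃ K, Nonempty (cayley H T ≃g GPr K) := by
  obtain ⟨K, hK⟩ := exists_zpow_mem_iff_dvd (Subgroup.zpowers (b * c)) (b * a)
  obtain ⟨ε, hε⟩ := h.exists_sign
  have hinj := h.injective_prismMap hbc hne hK
  let e := Equiv.ofBijective (prismMap a b c K) ⟨hinj, h.surjective_prismMap hbc hK⟩
  have e_apply (v : ZMod 2 × ZMod (2 * K)) : e v = prismMap a b c K v := rfl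
  have mem_neighbors (v w : ZMod 2 × ZMod (2 * K)) :
      (ε (e v) = 1 ∧ ∃ s ∈ T, e w = e v * s) ↔ Even v.2.val ∧ w ∈ prismNeighbors K v := by
    rw [e_apply, e_apply, h.map_prismMap_eq_one_iff hbc hε]
    refine and_congr_right fun hv => ?_
    rw [← hinj.mem_set_image, h.image_prismNeighbors hbc hK hv]
    exact exists_congr fun s => and_congr_right fun _ => eq_comm
  exact ⟨K, ⟨(RelIso.mk e fun {v w} => by
    rw [h.cayley_adj_iff_sign hε, mem_neighbors, mem_neighbors, GPr_adj]).symm⟩⟩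

end IsHexagonalTriple

theorem natCard_eq_of_iso_GPr {V : Type*} {Γ : SimpleGraph V} {K : ℕ} (e : Γ ≃g GPr K) :
    Nat.card V = 4 * K := by
  rw [Nat.card_congr e.toEquiv, Nat.card_prod, Nat.card_zmod, Nat.card_zmod]
  ring

theorem natCard_quotient_range_toLin' {ι : Type*} [Fintype ι] [DecidableEq ι] {M : Matrix ι ι ℤ}
    (hM : M.det ≠ 0) :
    Nat.card ((ι → ℤ) ⧸ LinearMap.range (Matrix.toLin' M)) = M.det.natAbs := by
  have hinj : Function.Injective (Matrix.toLin' M) := by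
    rw [injective_iff_map_eq_zero]
    exact fun v hv => Matrix.eq_zero_of_mulVec_eq_zero hM hv
  rw [← Submodule.natAbs_det_equiv _ (LinearEquiv.ofInjective _ hinj), ← LinearMap.det_toLin']
  exact congrArg (fun f : (ι → ℤ) →ₗ[ℤ] ι → ℤ => f.det.natAbs) (LinearMap.ext fun _ => rfl)

/-- The homomorphism `v ↦ x ^ v 0 * y ^ v 1` from the free abelian group of rank two onto the
subgroup generated by two commuting elements. -/
def zpowPairHom {H : Type*} [Group H] {x y : H} (hxy : Commute x y) :
    Multiplicative (Fin 2 → ℤ) →* H where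
  toFun v := x ^ v.toAdd 0 * y ^ v.toAdd 1
  map_one' := by simp
  map_mul' v w := by
    simp only [toAdd_mul, Pi.add_apply, zpow_add]
    exact (hxy.zpow_zpow _ _).mul_mul_mul_comm _ _

/-- Generators `t, x, y` of a generalized dihedral group: the involution `t` inverts the commuting
elements `x` and `y`, and lies outside the index-two subgroup generated by them. -/
structure IsDihedralTriple_s14 {H : Type*} [Group H] (t x y : H) : Prop where
  sq_eq_one : t ^ 2 = 1
  conj_fst : t * x * t = x⁻¹
  conj_snd : t * y * t = y⁻¹
  commute : Commute x y
  closure_eq_top : Subgroup.closure {t, x, y} = ⊤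
  exists_sign : ∃ ε : H →* ℤˣ, ε t = -1 ∧ ε x = 1 ∧ ε y = 1

namespace IsDihedralTriple_s14

variable {H : Type*} [Group H] {t x y : H}

theorem isHexagonalTriple (h : IsDihedralTriple_s14 t x y) :
    IsHexagonalTriple {t, t * x, t * y} t (t * x) (t * y) where
  eq_insert := rfl
  mul_self s hs := by
    obtain rfl | rfl | rfl := hs
    · rw [← sq, h.sq_eq_one]
    · rw [← mul_assoc, h.conj_fst, inv_mul_cancel]
    · rw [← mul_assoc, h.conj_snd, inv_mul_cancel]
  hexagon := by
    rw [sq]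
    calc t * (t * x) * (t * y) * (t * (t * x) * (t * y))
        = t * t * x * (t * y * t) * (t * x * t) * y := by simp only [mul_assoc]
      _ = x * (y⁻¹ * x⁻¹) * y := by
        rw [← sq, h.sq_eq_one, one_mul, h.conj_fst, h.conj_snd, mul_assoc x]
      _ = 1 := by rw [← mul_inv_rev, h.commute.eq, mul_inv_rev, mul_inv_cancel_left, inv_mul_cancel]
  closure_eq_top := by
    rw [eq_top_iff, ← h.closure_eq_top, Subgroup.closure_le]
    have ht : t ∈ Subgroup.closure {t, t * x, t * y} := Subgroup.subset_closure (by simp)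
    rintro _ (rfl | rfl | rfl)
    · exact ht
    · exact (Subgroup.mul_mem_cancel_left _ ht).1 (Subgroup.subset_closure (by simp))
    · exact (Subgroup.mul_mem_cancel_left _ ht).1 (Subgroup.subset_closure (by simp))
  exists_sign := by
    obtain ⟨ε, ht, hx, hy⟩ := h.exists_sign
    refine ⟨ε, ?_⟩
    rintro _ (rfl | rfl | rfl) <;> simp [ht, hx, hy]

theorem mem_range_or_mul_mem_range (h : IsDihedralTriple_s14 t x y) (g : H) :
    g ∈ (zpowPairHom h.commute).range ∨ g * t ∈ (zpowPairHom h.commute).range := by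
  set N := (zpowPairHom h.commute).range
  have hx : x ∈ N := ⟨.ofAdd ![1, 0], by simp [zpowPairHom]⟩
  have hy : y ∈ N := ⟨.ofAdd ![0, 1], by simp [zpowPairHom]⟩
  have step (g u : H) (hu : u ∈ N) (hconj : t * u * t = u⁻¹) (hg : g ∈ N ∨ g * t ∈ N) :
      g * (t * u) ∈ N ∨ g * (t * u) * t ∈ N := by
    obtain hg | hg := hg
    · exact Or.inr (by rw [mul_assoc, hconj]; exact mul_mem hg (inv_mem hu))
    · exact Or.inl (by rw [← mul_assoc]; exact mul_mem hg hu)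
  have hex := h.isHexagonalTriple
  induction g using forall_of_closure_eq_top hex.mul_self hex.closure_eq_top with
  | one => exact Or.inl (one_mem N)
  | mul_right g ih s hs =>
    obtain rfl | rfl | rfl := hs
    · simpa using step g 1 (one_mem N) (by rw [mul_one, inv_one, ← sq, h.sq_eq_one]) ih
    · exact step g x hx h.conj_fst ih
    · exact step g y hy h.conj_snd ih

theorem natCard_eq_two_mul (h : IsDihedralTriple_s14 t x y) :
    Nat.card H = 2 * Nat.card (zpowPairHom h.commute).range := by
  obtain ⟨ε, ht, hx, hy⟩ := h.exists_sign
  have hker : (zpowPairHom h.commute).range = ε.ker := by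
    have range_le : (zpowPairHom h.commute).range ≤ ε.ker := by
      rintro _ ⟨v, rfl⟩
      simp [zpowPairHom, hx, hy]
    refine le_antisymm range_le fun g hg => (h.mem_range_or_mul_mem_range g).resolve_right ?_
    intro hgt
    simpa [ht, MonoidHom.mem_ker.1 hg] using MonoidHom.mem_ker.1 (range_le hgt)
  have hrange : ε.range = ⊤ := by
    refine MonoidHom.range_eq_top.2 fun u => ?_
    obtain rfl | rfl := Int.units_eq_one_or u
    exacts [⟨1, map_one ε⟩, ⟨t, ht⟩]
  rw [hker, ← ε.ker.index_mul_card, Subgroup.index_ker, hrange, Subgroup.card_top,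
    Nat.card_eq_fintype_card, Fintype.card_units_int]

end IsDihedralTriple_s14

theorem addLeft_zpow {A : Type*} [AddCommGroup A] (p : A) (k : ℤ) :
    Equiv.addLeft p ^ k = Equiv.addLeft (k • p) :=
  (map_zpow (MonoidHom.mk' (fun q : Multiplicative A => Equiv.addLeft q.toAdd)
    fun q r => Equiv.addLeft_add q.toAdd r.toAdd) (.ofAdd p) k).symm

section Presentation

variable (m n ℓ : ℕ)

theorem gent_sq : gent m n ℓ ^ 2 = 1 :=
  PresentedGroup.one_of_mem (rels := rels m n ℓ) (by simp [rels])

theorem inv_gent : (gent m n ℓ)⁻¹ = gent m n ℓ :=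
  inv_eq_of_mul_eq_one_left (sq (gent m n ℓ) ▸ gent_sq m n ℓ)

theorem genx_pow : genx m n ℓ ^ (n / 2) = 1 :=
  PresentedGroup.one_of_mem (rels := rels m n ℓ) (by simp [rels])

theorem geny_pow : geny m n ℓ ^ m = genx m n ℓ ^ ((ℓ + m) / 2) :=
  mul_inv_eq_one.1 (PresentedGroup.one_of_mem (rels := rels m n ℓ)
    (x := .of Gen.y ^ m * (.of Gen.x ^ ((ℓ + m) / 2))⁻¹) (by simp [rels]))

theorem exists_signHom : ∃ ε : G m n ℓ →* ℤˣ, ε (gent m n ℓ) = -1 ∧ ε (genx m n ℓ) = 1 ∧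
    ε (geny m n ℓ) = 1 := by
  have hrels : ∀ r ∈ rels m n ℓ, FreeGroup.lift (fun
      | .t => -1
      | .x => 1
      | .y => 1 : Gen → ℤˣ) r = 1 := by
    rintro r (rfl | rfl | rfl | rfl | rfl | rfl) <;> simp
  exact ⟨PresentedGroup.toGroup hrels, PresentedGroup.toGroup.of hrels,
    PresentedGroup.toGroup.of hrels, PresentedGroup.toGroup.of hrels⟩

theorem isDihedralTriple : IsDihedralTriple_s14 (gent m n ℓ) (genx m n ℓ) (geny m n ℓ) where
  sq_eq_one := gent_sq m n ℓ
  conj_fst := by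
    nth_rw 2 [← inv_gent]
    exact eq_inv_of_mul_eq_one_left <| PresentedGroup.one_of_mem (rels := rels m n ℓ)
      (x := .of Gen.t * .of Gen.x * (.of Gen.t)⁻¹ * .of Gen.x) (by simp [rels])
  conj_snd := by
    nth_rw 2 [← inv_gent]
    exact eq_inv_of_mul_eq_one_left <| PresentedGroup.one_of_mem (rels := rels m n ℓ)
      (x := .of Gen.t * .of Gen.y * (.of Gen.t)⁻¹ * .of Gen.y) (by simp [rels])
  commute := commutatorElement_eq_one_iff_commute.1 <| PresentedGroup.one_of_mem
    (rels := rels m n ℓ) (x := .of Gen.x * .of Gen.y * (.of Gen.x)⁻¹ * (.of Gen.y)⁻¹)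
    (by simp [rels])
  closure_eq_top := by
    rw [← PresentedGroup.closure_range_of (rels m n ℓ)]
    congr 1
    ext g
    constructor
    · rintro (rfl | rfl | rfl)
      exacts [⟨.t, rfl⟩, ⟨.x, rfl⟩, ⟨.y, rfl⟩]
    · rintro ⟨_ | _ | _, rfl⟩
      exacts [Or.inl rfl, Or.inr (Or.inl rfl), Or.inr (Or.inr rfl)]
  exists_sign := exists_signHom m n ℓ

theorem colorClasses_eq_image : colorClasses m n ℓ = colorClass '' S m n ℓ := by
  simp only [colorClasses, S, Set.image_insert_eq, Set.image_singleton]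
  rfl

theorem exists_dihedral_action {A : Type*} [AddCommGroup A] {p q : A} (hp : (n / 2) • p = 0)
    (hq : m • q = ((ℓ + m) / 2) • p) : ∃ φ : G m n ℓ →* Equiv.Perm A,
      φ (genx m n ℓ) = Equiv.addLeft p ∧ φ (geny m n ℓ) = Equiv.addLeft q := by
  have addLeft_pow (r : A) (k : ℕ) : Equiv.addLeft r ^ k = Equiv.addLeft (k • r) := by
    rw [← zpow_natCast, addLeft_zpow, natCast_zsmul]
  have hrels : ∀ r ∈ rels m n ℓ, FreeGroup.lift (fun
      | .t => Equiv.neg A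
      | .x => Equiv.addLeft p
      | .y => Equiv.addLeft q : Gen → Equiv.Perm A) r = 1 := by
    rintro r (rfl | rfl | rfl | rfl | rfl | rfl) <;> ext b <;> simp [addLeft_pow, hp, hq, sq]
  exact ⟨PresentedGroup.toGroup hrels, PresentedGroup.toGroup.of hrels,
    PresentedGroup.toGroup.of hrels⟩

/-- The matrix whose columns span the lattice of pairs `(i, j)` with `x ^ i * y ^ j = 1` in `G`. -/
def relationMatrix : Matrix (Fin 2) (Fin 2) ℤ :=
  !![(n / 2 : ℕ), -((ℓ + m) / 2 : ℕ); 0, m]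

theorem mem_range_relationMatrix {w : Fin 2 → ℤ} :
    w ∈ LinearMap.range (Matrix.toLin' (relationMatrix m n ℓ)) ↔
      ∃ u v : ℤ, w 0 = (n / 2 : ℕ) * u - ((ℓ + m) / 2 : ℕ) * v ∧ w 1 = m * v := by
  simp only [LinearMap.mem_range, Matrix.toLin'_apply, relationMatrix, Matrix.cons_mulVec,
    Matrix.cons_dotProduct, Matrix.dotProduct_of_isEmpty, Matrix.empty_mulVec, funext_iff,
    Fin.forall_fin_two, Matrix.cons_val_zero, Matrix.cons_val_one]
  constructor
  · rintro ⟨v, h₀, h₁⟩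
    refine ⟨v 0, v 1, ?_, ?_⟩ <;> simp [← h₀, ← h₁, Matrix.vecHead, Matrix.vecTail, sub_eq_add_neg]
  · rintro ⟨u, v, h₀, h₁⟩
    refine ⟨![u, v], ?_, ?_⟩ <;> simp [h₀, h₁, Matrix.vecHead, Matrix.vecTail, sub_eq_add_neg]

theorem zpow_mul_zpow_eq_one_iff (w : Fin 2 → ℤ) : genx m n ℓ ^ w 0 * geny m n ℓ ^ w 1 = 1 ↔
    w ∈ LinearMap.range (Matrix.toLin' (relationMatrix m n ℓ)) := by
  constructor
  · intro hw
    let Λ := LinearMap.range (Matrix.toLin' (relationMatrix m n ℓ))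
    have hp : (n / 2) • Λ.mkQ (Pi.single 0 1) = 0 := by
      rw [← map_nsmul, Submodule.mkQ_apply, Submodule.Quotient.mk_eq_zero,
        mem_range_relationMatrix]
      exact ⟨1, 0, by simp, by simp⟩
    have hq : m • Λ.mkQ (Pi.single 1 1) = ((ℓ + m) / 2) • Λ.mkQ (Pi.single 0 1) := by
      rw [← sub_eq_zero, ← map_nsmul, ← map_nsmul, ← map_sub, Submodule.mkQ_apply,
        Submodule.Quotient.mk_eq_zero, mem_range_relationMatrix]
      exact ⟨0, 1, by simp, by simp⟩
    obtain ⟨φ, hx, hy⟩ := exists_dihedral_action m n ℓ hp hq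
    have hzero := congrArg (fun g => φ g 0) hw
    simp only [map_mul, map_zpow, hx, hy, addLeft_zpow, map_one, Equiv.Perm.mul_apply,
      Equiv.coe_addLeft, Equiv.Perm.one_apply, add_zero, ← map_zsmul, ← map_add] at hzero
    rw [Submodule.mkQ_apply, Submodule.Quotient.mk_eq_zero] at hzero
    have hsum : w 0 • Pi.single 0 1 + w 1 • Pi.single 1 1 = w := by
      ext i; fin_cases i <;> simp
    rwa [hsum] at hzero
  · intro hw
    obtain ⟨u, v, h₀, h₁⟩ := (mem_range_relationMatrix m n ℓ).1 hw
    rw [h₀, h₁, zpow_sub, zpow_mul, zpow_mul, zpow_mul, zpow_natCast, zpow_natCast, zpow_natCast,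
      genx_pow, geny_pow, one_zpow, one_mul, inv_mul_cancel]

theorem ker_zpowPairHom : (zpowPairHom (isDihedralTriple m n ℓ).commute).ker =
    (LinearMap.range (Matrix.toLin' (relationMatrix m n ℓ))).toAddSubgroup.toSubgroup :=
  Subgroup.ext fun w => zpow_mul_zpow_eq_one_iff m n ℓ w.toAdd

theorem natCard_G (hm : m ≠ 0) (hn : n ≠ 0) (hne : Even n) : Nat.card (G m n ℓ) = m * n := by
  obtain ⟨k, rfl⟩ := hne.two_dvd
  have hdet : (relationMatrix m (2 * k) ℓ).det = (k * m : ℕ) := by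
    simp [relationMatrix, Matrix.det_fin_two_of]
  have hcard : (zpowPairHom (isDihedralTriple m (2 * k) ℓ).commute).ker.index = k * m := by
    rw [ker_zpowPairHom, AddSubgroup.index_toSubgroup]
    refine (natCard_quotient_range_toLin' ?_).trans (by rw [hdet, Int.natAbs_natCast])
    rw [hdet]
    exact_mod_cast mul_ne_zero (by rintro rfl; exact hn rfl) hm
  rw [(isDihedralTriple m _ ℓ).natCard_eq_two_mul, ← Subgroup.index_ker, hcard]
  ring

end Presentation

/- If `H` is infinite then `Nat.card H / 4 = 0`, and `GPr 0` is the two-way infinite prism since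
`ZMod 0 = ℤ`. -/
theorem statement14_general {H : Type*} [Group H] {T : Set H} {a b c : H}
    (h : IsHexagonalTriple T a b c) :
    (∀ f : cayley H T ≃g cayley H T, (∃ C ∈ colorClass '' T, Sym2.map f '' C = C) →
      ∀ C ∈ colorClass '' T, Sym2.map f '' C ∈ colorClass '' T) ∨
    (4 ∣ Nat.card H ∧ Nonempty (cayley H T ≃g GPr (Nat.card H / 4))) := by
  by_cases hprism : ∃ a b c, IsHexagonalTriple T a b c ∧ Commute b c ∧ b ≠ c
  · obtain ⟨a, b, c, h, hbc, hne⟩ := hprism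
    obtain ⟨K, ⟨e⟩⟩ := h.exists_iso_GPr hbc hne
    rw [natCard_eq_of_iso_GPr e, Nat.mul_div_cancel_left K four_pos]
    exact Or.inr ⟨Nat.dvd_mul_right 4 K, ⟨e⟩⟩
  · refine Or.inl ?_
    rintro f ⟨_, ⟨s, hs, rfl⟩, hfix⟩ _ ⟨r, hr, rfl⟩
    obtain ⟨b, c, h⟩ := h.exists_rotation hs
    have hbc : Commute b c → b = c := fun hbc => by_contra fun hne => hprism ⟨s, b, c, h, hbc, hne⟩
    obtain ⟨u, hu, himage⟩ := h.exists_image_colorClass_eq hbc hfix hr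
    exact ⟨u, hu, himage.symm⟩

/-- **Proposition 5.2.** Either every automorphism of `Γ = HTG(m,n,ℓ)` fixing setwise at
least one of the color classes `R`, `B`, `Gr` is color permuting, or `4 ∣ mn` and `Γ` is
isomorphic to the generalized prism `GPr(mn/4)`. -/
theorem statement14 (m n ℓ : ℕ) (hm : 0 < m) (hn : 4 ≤ n) (hne : Even n)
    (hl : ℓ ≤ n - 1) (hpar : ℓ % 2 = m % 2) :
    (∀ f : cayley (G m n ℓ) (S m n ℓ) ≃g cayley (G m n ℓ) (S m n ℓ),
      (∃ C ∈ colorClasses m n ℓ, Sym2.map ⇑f '' C = C) → IsColorPermuting f) ∨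
    (4 ∣ m * n ∧ Nonempty (cayley (G m n ℓ) (S m n ℓ) ≃g GPr (m * n / 4))) := by
  have hG := statement14_general (isDihedralTriple m n ℓ).isHexagonalTriple
  rwa [natCard_G m n ℓ hm.ne' (by omega) hne, ← S, ← colorClasses_eq_image] at hG

end HTGPaper
end
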